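/- arXiv:2407.16605 — 3 statements merged into one kernel-verified Lean document; each statement's English description precedes it below -/
import Mathlib

section
/- (Existence and uniqueness of mild solutions.) Under the setting hypotheses, for every u₀ ∈ X_γ there exists exactly one mild solution u : (0,∞) → X_α with initial datum u₀, i.e. exactly one strongly measurable u with sup_{0<t≤T} t^{d_γ}‖u(t)‖_{X_α} < ∞ for every T > 0 satisfying u(t) = S_{γα}(t)u₀ + Σ_{i=1}^n ∫_0^t S_i(t−τ) P_i u(τ) dτ for all t > 0. Moreover u is continuous on (0,∞), u depends linearly on u₀, and for every T > 0 there exists a constant M′ = M′(T), independent of u₀, such that ‖u(t)‖_{X_α} ≤ M′ t^{−d_γ} ‖u₀‖_{X_γ} for all 0 < t ≤ T. -/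
/-!
Mild solutions are the solutions of the linear Volterra equation `u = f + D u`, where
`f t = Sγα t u₀` and `D` is the Duhamel operator with singular kernels `S i (t - τ) ∘ P i`. On
`(0, T]` the sup norm with weight `t ^ dγ * exp (-l * t)` makes `D` a contraction with constant
`1 / 2` once the rate `l` is large (`exists_rate_duhamel_le`). This rests on the scalar bound
`eventually_integral_kernel_le`, in which a small power of `l` is gained from the exponential at the
price of a slightly stronger, still integrable, singularity; the Beta-type integral that remains is
estimated by splitting it at `t / 2`.

Any mild solution has finite weighted norm, so the contraction can be absorbed and yields the a
priori bound `exists_norm_mildSolution_le`. Since mild solutions are closed under linear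
combinations, uniqueness and linear dependence on `u₀` follow by applying it to differences with
zero initial datum. For existence, the Neumann series `∑ D^k f` converges for every `T`
simultaneously (`exists_eq_add_duhamel`); its terms are continuous on `(0, ∞)` by dominated
convergence (`continuousOn_duhamel`) and the convergence is locally uniform, so the sum is
continuous, and it solves the equation by interchanging sum and integral.
-/

open MeasureTheory Set

/-- `u : (0,∞) → X_α` is a mild solution with initial datum `u₀ ∈ X_γ` of the
linearly perturbed problem: it is strongly measurable, satisfies
`sup_{0<t≤T} t^{d_γ} ‖u(t)‖ < ∞` for every `T > 0`, and the Duhamel formula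
`u(t) = S_{γα}(t)u₀ + Σ_i ∫_0^t S_i(t-τ) P_i u(τ) dτ` holds for every `t > 0`. -/
def IsMildSolution {n : ℕ} {Xγ Xα : Type*}
    [NormedAddCommGroup Xγ] [NormedSpace ℝ Xγ]
    [NormedAddCommGroup Xα] [NormedSpace ℝ Xα]
    {Xβ : Fin n → Type*} [∀ i, NormedAddCommGroup (Xβ i)] [∀ i, NormedSpace ℝ (Xβ i)]
    (Sγα : ℝ → Xγ →L[ℝ] Xα)
    (S : (i : Fin n) → ℝ → (Xβ i →L[ℝ] Xα))
    (P : (i : Fin n) → Xα →L[ℝ] Xβ i)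
    (dγ : ℝ) (u₀ : Xγ) (u : ℝ → Xα) : Prop :=
  AEStronglyMeasurable u (volume.restrict (Ioi (0:ℝ))) ∧
  (∀ T > (0:ℝ), ∃ K : ℝ, ∀ t : ℝ, 0 < t → t ≤ T → t ^ dγ * ‖u t‖ ≤ K) ∧
  ∀ t > (0:ℝ),
    (∀ i, IntegrableOn (fun τ => (S i (t - τ)) ((P i) (u τ))) (Ioo 0 t)) ∧
    u t = (Sγα t) u₀ + ∑ i, ∫ τ in Ioo (0:ℝ) t, (S i (t - τ)) ((P i) (u τ))

open Filter Topology

/-! ### Singular kernels -/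

/-- The singular kernel is dominated by the sum of its two one-sided singularities, because one of
`τ`, `t - τ` is at least `t / 2`. -/
lemma rpow_mul_rpow_le {a d t τ : ℝ} (ha : 0 ≤ a) (hd : 0 ≤ d) (h0 : 0 < τ) (h1 : τ < t) :
    (t - τ) ^ (-d) * τ ^ (-a) ≤
      (t / 2) ^ (-a) * (t - τ) ^ (-d) + (t / 2) ^ (-d) * τ ^ (-a) := by
  have ht : 0 < t - τ := sub_pos.2 h1
  have p1 : 0 < (t - τ) ^ (-d) := Real.rpow_pos_of_pos ht _
  have p2 : 0 < τ ^ (-a) := Real.rpow_pos_of_pos h0 _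
  have p3 : 0 < (t / 2) ^ (-a) := Real.rpow_pos_of_pos (by linarith) _
  have p4 : 0 < (t / 2) ^ (-d) := Real.rpow_pos_of_pos (by linarith) _
  rcases le_total (t / 2) τ with h | h
  · have : τ ^ (-a) ≤ (t / 2) ^ (-a) :=
      Real.rpow_le_rpow_of_nonpos (by linarith) h (by linarith)
    nlinarith [mul_pos p4 p2]
  · have : (t - τ) ^ (-d) ≤ (t / 2) ^ (-d) :=
      Real.rpow_le_rpow_of_nonpos (by linarith) (by linarith) (by linarith)
    nlinarith [mul_pos p3 p1]

lemma integrableOn_rpow_neg {a : ℝ} (t : ℝ) (ha : a < 1) :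
    IntegrableOn (fun τ : ℝ => τ ^ (-a)) (Ioo 0 t) := by
  have := (intervalIntegral.intervalIntegrable_rpow' (a := 0) (b := t) (r := -a) (by linarith)).1
  exact this.mono_set Ioo_subset_Ioc_self

lemma integrableOn_sub_rpow_neg {d : ℝ} (t : ℝ) (hd : d < 1) :
    IntegrableOn (fun τ : ℝ => (t - τ) ^ (-d)) (Ioo 0 t) := by
  have h := (intervalIntegral.intervalIntegrable_rpow' (a := 0) (b := t) (r := -d) (by linarith))
  have := (h.comp_sub_left t).symm
  simp only [sub_zero, sub_self] at this
  exact this.1.mono_set Ioo_subset_Ioc_self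

lemma integral_rpow_neg {a t : ℝ} (ha : a < 1) (ht : 0 < t) :
    ∫ τ in Ioo 0 t, τ ^ (-a) = t ^ (1 - a) / (1 - a) := by
  rw [← integral_Ioc_eq_integral_Ioo, ← intervalIntegral.integral_of_le ht.le,
    integral_rpow (Or.inl (by linarith)), Real.zero_rpow (by linarith)]
  ring_nf

lemma integral_sub_rpow_neg {d t : ℝ} (hd : d < 1) (ht : 0 < t) :
    ∫ τ in Ioo 0 t, (t - τ) ^ (-d) = t ^ (1 - d) / (1 - d) := by
  rw [← integral_rpow_neg hd ht, ← integral_Ioc_eq_integral_Ioo, ← integral_Ioc_eq_integral_Ioo,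
    ← intervalIntegral.integral_of_le ht.le, ← intervalIntegral.integral_of_le ht.le,
    intervalIntegral.integral_comp_sub_left (fun x : ℝ => x ^ (-d)) t]
  simp

/-- The weight `t ^ (-a) * exp (l * t)`: the growth `t ^ (-a)` allowed at the initial time, with an
exponential factor whose rate `l` is at our disposal. -/
noncomputable def weight (a l t : ℝ) : ℝ := t ^ (-a) * Real.exp (l * t)

lemma weight_pos {a l t : ℝ} (ht : 0 < t) : 0 < weight a l t :=
  mul_pos (Real.rpow_pos_of_pos ht _) (Real.exp_pos _)

lemma rpow_neg_le_weight {a l t : ℝ} (hl : 0 ≤ l) (ht : 0 < t) : t ^ (-a) ≤ weight a l t :=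
  le_mul_of_one_le_right (Real.rpow_nonneg ht.le _) (Real.one_le_exp (by positivity))

lemma integrableOn_kernel {a d : ℝ} (l t : ℝ) (ha0 : 0 ≤ a) (ha1 : a < 1) (hd0 : 0 ≤ d)
    (hd1 : d < 1) :
    IntegrableOn (fun τ => (t - τ) ^ (-d) * weight a l τ) (Ioo 0 t) := by
  have h : IntegrableOn (fun τ => (t - τ) ^ (-d) * τ ^ (-a)) (Ioo 0 t) := by
    refine Integrable.mono' (((integrableOn_sub_rpow_neg t hd1).const_mul ((t / 2) ^ (-a))).add
      ((integrableOn_rpow_neg t ha1).const_mul ((t / 2) ^ (-d)))) ?_ ?_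
    · exact Measurable.aestronglyMeasurable (by fun_prop)
    · refine (ae_restrict_iff' measurableSet_Ioo).2 (Eventually.of_forall fun τ hτ => ?_)
      have p1 : 0 ≤ (t - τ) ^ (-d) := Real.rpow_nonneg (by linarith [hτ.2]) _
      have p2 : 0 ≤ τ ^ (-a) := Real.rpow_nonneg hτ.1.le _
      rw [Real.norm_of_nonneg (mul_nonneg p1 p2)]
      exact rpow_mul_rpow_le ha0 hd0 hτ.1 hτ.2
  refine Integrable.congr
    (Integrable.mul_bdd (c := Real.exp (|l| * t)) h (g := fun τ => Real.exp (l * τ))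
      (Measurable.aestronglyMeasurable (by fun_prop)) ?_)
    (Eventually.of_forall fun τ => by simp only [weight]; ring)
  refine (ae_restrict_iff' measurableSet_Ioo).2 (Eventually.of_forall fun τ hτ => ?_)
  rw [Real.norm_of_nonneg (Real.exp_pos _).le]
  refine Real.exp_le_exp.2 ((mul_le_mul_of_nonneg_right (le_abs_self l) hτ.1.le).trans ?_)
  exact mul_le_mul_of_nonneg_left hτ.2.le (abs_nonneg l)

lemma exp_neg_le_rpow_neg {e x : ℝ} (he0 : 0 ≤ e) (he1 : e ≤ 1) (hx : 0 < x) :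
    Real.exp (-x) ≤ x ^ (-e) := by
  rw [Real.rpow_neg hx.le, Real.exp_neg]
  refine inv_anti₀ (Real.rpow_pos_of_pos hx _) ?_
  rcases le_total x 1 with h | h
  · exact (Real.rpow_le_one hx.le h he0).trans (Real.one_le_exp hx.le)
  · have h2 : x ^ e ≤ x ^ (1:ℝ) := Real.rpow_le_rpow_of_exponent_le h he1
    rw [Real.rpow_one] at h2
    linarith [Real.add_one_le_exp x]

/-- The smoothing estimate on which everything rests: convolving the weight with an integrable
power singularity returns an arbitrarily small multiple of the weight once the exponential rate is
large. The factor `exp (-l * (t - τ))` is traded for the small constant `l ^ (-e)` at the price of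
the slightly worse, still integrable, singularity `(t - τ) ^ (-(d + e))`, where `e = (1 - d) / 2`. -/
lemma eventually_integral_kernel_le {a d T η : ℝ} (ha0 : 0 ≤ a) (ha1 : a < 1) (hd0 : 0 ≤ d)
    (hd1 : d < 1) (hη : 0 < η) :
    ∀ᶠ l in atTop, ∀ t, 0 < t → t ≤ T →
      ∫ τ in Ioo 0 t, (t - τ) ^ (-d) * weight a l τ ≤ η * weight a l t := by
  set e := (1 - d) / 2 with he
  set δ := d + e with hδ
  have he0 : 0 < e := by linarith
  have hδ0 : 0 ≤ δ := by linarith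
  have hδ1 : δ < 1 := by linarith
  set C := (2 ^ a / (1 - δ) + 2 ^ δ / (1 - a)) * T ^ (1 - δ) with hC
  have hlim : Tendsto (fun l : ℝ => l ^ (-e) * C) atTop (𝓝 0) := by
    simpa using (tendsto_rpow_neg_atTop he0).mul_const C
  filter_upwards [hlim.eventually_lt_const hη, eventually_gt_atTop 0] with l hl hl0 t ht htT
  have hmaj : ∀ τ ∈ Ioo 0 t, (t - τ) ^ (-d) * weight a l τ ≤
      l ^ (-e) * Real.exp (l * t) *
        ((t / 2) ^ (-a) * (t - τ) ^ (-δ) + (t / 2) ^ (-δ) * τ ^ (-a)) := by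
    intro τ hτ
    have hs : 0 < t - τ := sub_pos.2 hτ.2
    have h1 : Real.exp (l * τ) ≤ Real.exp (l * t) * (l ^ (-e) * (t - τ) ^ (-e)) := by
      rw [← Real.mul_rpow hl0.le hs.le]
      calc Real.exp (l * τ) = Real.exp (l * t) * Real.exp (-(l * (t - τ))) := by
            rw [← Real.exp_add]; ring_nf
        _ ≤ _ := by
            gcongr
            exact exp_neg_le_rpow_neg he0.le (by linarith) (by positivity)
    calc (t - τ) ^ (-d) * weight a l τ
        ≤ (t - τ) ^ (-d) * (τ ^ (-a) * (Real.exp (l * t) * (l ^ (-e) * (t - τ) ^ (-e)))) := by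
          unfold weight
          have := hτ.1
          gcongr
      _ = l ^ (-e) * Real.exp (l * t) * ((t - τ) ^ (-δ) * τ ^ (-a)) := by
          rw [show -δ = -d + -e by rw [hδ]; ring, Real.rpow_add hs]; ring
      _ ≤ _ := by
          gcongr
          exact rpow_mul_rpow_le ha0 hδ0 hτ.1 hτ.2
  have hi1 := (integrableOn_sub_rpow_neg t hδ1).const_mul ((t / 2) ^ (-a))
  have hi2 := (integrableOn_rpow_neg t ha1).const_mul ((t / 2) ^ (-δ))
  calc ∫ τ in Ioo 0 t, (t - τ) ^ (-d) * weight a l τ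
      ≤ ∫ τ in Ioo 0 t, l ^ (-e) * Real.exp (l * t) *
        ((t / 2) ^ (-a) * (t - τ) ^ (-δ) + (t / 2) ^ (-δ) * τ ^ (-a)) :=
        setIntegral_mono_on (integrableOn_kernel l t ha0 ha1 hd0 hd1)
          ((hi1.add hi2).const_mul _) measurableSet_Ioo hmaj
    _ = l ^ (-e) * Real.exp (l * t) * ((t / 2) ^ (-a) * (t ^ (1 - δ) / (1 - δ)) +
          (t / 2) ^ (-δ) * (t ^ (1 - a) / (1 - a))) := by
        rw [integral_const_mul, integral_add hi1 hi2, integral_const_mul, integral_const_mul,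
          integral_sub_rpow_neg hδ1 ht, integral_rpow_neg ha1 ht]
    _ = l ^ (-e) * ((2 ^ a / (1 - δ) + 2 ^ δ / (1 - a)) * t ^ (1 - δ)) * weight a l t := by
        have k : ∀ x : ℝ, (t / 2) ^ (-x) = t ^ (-x) * 2 ^ x := fun x => by
          rw [Real.div_rpow ht.le (by norm_num), Real.rpow_neg (by norm_num : (0:ℝ) ≤ 2)]
          simp
        rw [k, k, weight, sub_eq_add_neg 1 a, sub_eq_add_neg 1 δ, Real.rpow_add ht,
          Real.rpow_add ht]
        ring
    _ ≤ l ^ (-e) * C * weight a l t := by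
        have := (weight_pos (a := a) (l := l) ht).le
        have : 0 < 1 - δ := by linarith
        have : 0 < 1 - a := by linarith
        rw [hC]
        gcongr
    _ ≤ η * weight a l t := by
        have := (weight_pos (a := a) (l := l) ht).le
        gcongr

/-! ### The Duhamel operator -/

/-- The Duhamel (Volterra) operator `v ↦ ∑ i, ∫_0^t A i (t - τ) v(τ) dτ`. -/
noncomputable def duhamel {n : ℕ} {X : Type*} [NormedAddCommGroup X] [NormedSpace ℝ X]
    (A : Fin n → ℝ → X →L[ℝ] X) (v : ℝ → X) (t : ℝ) : X :=
  ∑ i, ∫ τ in Ioo (0:ℝ) t, A i (t - τ) (v τ)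

section Duhamel

variable {n : ℕ} {X : Type*} [NormedAddCommGroup X] [NormedSpace ℝ X]
  {A : Fin n → ℝ → X →L[ℝ] X} {a : ℝ} {d : Fin n → ℝ}

lemma norm_kernel_le {B : ℝ → X →L[ℝ] X} {b M T l K t τ : ℝ} {v : ℝ → X}
    (hM : ∀ s, 0 < s → s ≤ T → ‖B s‖ ≤ M * s ^ (-b)) (hM0 : 0 ≤ M)
    (hv : ∀ t, 0 < t → t ≤ T → ‖v t‖ ≤ K * weight a l t)
    (htT : t ≤ T) (hτ : τ ∈ Ioo 0 t) :
    ‖B (t - τ) (v τ)‖ ≤ M * K * ((t - τ) ^ (-b) * weight a l τ) := by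
  have h1 := hM (t - τ) (sub_pos.2 hτ.2) (by linarith [hτ.1])
  have h2 := hv τ hτ.1 (hτ.2.le.trans htT)
  have h3 : 0 ≤ (t - τ) ^ (-b) := Real.rpow_nonneg (sub_nonneg.2 hτ.2.le) _
  calc ‖B (t - τ) (v τ)‖ ≤ ‖B (t - τ)‖ * ‖v τ‖ := (B (t - τ)).le_opNorm _
    _ ≤ (M * (t - τ) ^ (-b)) * (K * weight a l τ) := by gcongr
    _ = _ := by ring

/-- In the weighted sup norm on `(0, T]` with a large exponential rate, the Duhamel operator has
norm at most `1 / 2`. No measurability of `v` is needed. -/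
lemma exists_rate_duhamel_le (ha0 : 0 ≤ a) (ha1 : a < 1) (hd0 : ∀ i, 0 ≤ d i)
    (hd1 : ∀ i, d i < 1) {M T : ℝ} (hM0 : 0 ≤ M)
    (hM : ∀ i s, 0 < s → s ≤ T → ‖A i s‖ ≤ M * s ^ (-(d i))) :
    ∃ l : ℝ, 0 ≤ l ∧ ∀ (v : ℝ → X) (K : ℝ), 0 ≤ K →
      (∀ t, 0 < t → t ≤ T → ‖v t‖ ≤ K * weight a l t) →
      ∀ t, 0 < t → t ≤ T → ‖duhamel A v t‖ ≤ K / 2 * weight a l t := by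
  -- `n` summands, each of relative size at most `M * η`, must add up to at most `1 / 2`; the shifts
  -- by one keep `η` finite when `n` or `M` vanishes
  set η : ℝ := (2 * (M + 1) * (n + 1))⁻¹ with hη
  have hη0 : 0 < η := by positivity
  obtain ⟨l, hl, hl0⟩ := ((eventually_all.2 fun i =>
    eventually_integral_kernel_le (T := T) ha0 ha1 (hd0 i) (hd1 i) hη0).and
      (eventually_ge_atTop 0)).exists
  refine ⟨l, hl0, fun v K hK hv t ht htT => ?_⟩
  have hw := (weight_pos (a := a) (l := l) ht).le
  have hterm : ∀ i, ‖∫ τ in Ioo (0:ℝ) t, A i (t - τ) (v τ)‖ ≤ M * K * (η * weight a l t) := by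
    intro i
    calc _ ≤ ∫ τ in Ioo (0:ℝ) t, M * K * ((t - τ) ^ (-(d i)) * weight a l τ) :=
          norm_integral_le_of_norm_le
            ((integrableOn_kernel l t ha0 ha1 (hd0 i) (hd1 i)).const_mul _)
            ((ae_restrict_iff' measurableSet_Ioo).2 (Eventually.of_forall fun τ hτ =>
              norm_kernel_le (hM i) hM0 hv htT hτ))
      _ = M * K * ∫ τ in Ioo (0:ℝ) t, (t - τ) ^ (-(d i)) * weight a l τ := integral_const_mul _ _
      _ ≤ _ := by
          gcongr
          exact hl i t ht htT
  calc ‖duhamel A v t‖ ≤ ∑ i : Fin n, M * K * (η * weight a l t) :=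
        (norm_sum_le _ _).trans (Finset.sum_le_sum fun i _ => hterm i)
    _ = (n * M * η) * (K * weight a l t) := by simp; ring
    _ ≤ (1 / 2) * (K * weight a l t) := by
        have : n * M * η ≤ 1 / 2 := by
          rw [hη, ← div_eq_mul_inv, div_le_div_iff₀ (by positivity) (by norm_num)]
          have : (0:ℝ) ≤ n := n.cast_nonneg
          nlinarith
        gcongr
    _ = _ := by ring

/-- A strongly continuous, locally bounded operator family is jointly continuous. -/
lemma continuousAt_opFamily_apply {B : ℝ → X →L[ℝ] X} {b : ℝ}
    (hB : ∀ y, ContinuousOn (fun t => B t y) (Ioi 0))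
    (hM : ∀ T > (0:ℝ), ∃ M, 0 ≤ M ∧ ∀ s, 0 < s → s ≤ T → ‖B s‖ ≤ M * s ^ (-b))
    {Y : Type*} [TopologicalSpace Y] {f : Y → ℝ} {g : Y → X} {y : Y} (hf : ContinuousAt f y)
    (hg : ContinuousAt g y) (hy : 0 < f y) : ContinuousAt (fun z => B (f z) (g z)) y := by
  obtain ⟨M, -, hM⟩ := hM (f y + 1) (by linarith)
  have h1 : Tendsto (fun z => B (f z) (g y)) (𝓝 y) (𝓝 (B (f y) (g y))) :=
    ((hB (g y)).continuousAt (Ioi_mem_nhds hy)).tendsto.comp hf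
  have hpos : ∀ᶠ z in 𝓝 y, 0 < f z := hf.eventually (lt_mem_nhds hy)
  have hle : ∀ᶠ z in 𝓝 y, f z ≤ f y + 1 :=
    (hf.eventually (gt_mem_nhds (by linarith : f y < f y + 1))).mono fun z hz => le_of_lt hz
  have h2 : Tendsto (fun z => B (f z) (g z - g y)) (𝓝 y) (𝓝 0) := by
    have hlim : Tendsto (fun z => M * f z ^ (-b) * ‖g z - g y‖) (𝓝 y) (𝓝 0) := by
      have := ((hf.rpow_const (p := -b) (Or.inl hy.ne')).tendsto.const_mul M).mul
        ((hg.tendsto.sub_const (g y)).norm)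
      simpa using this
    refine squeeze_zero_norm' ?_ hlim
    filter_upwards [hpos, hle] with z h3 h4
    exact ((B (f z)).le_opNorm _).trans (by gcongr; exact hM _ h3 h4)
  have := h2.add h1
  simpa [ContinuousAt] using this

lemma integrableOn_duhamel {B : ℝ → X →L[ℝ] X} {b : ℝ} (ha0 : 0 ≤ a) (ha1 : a < 1)
    (hb0 : 0 ≤ b) (hb1 : b < 1)
    (hB : ∀ y, ContinuousOn (fun t => B t y) (Ioi 0))
    (hM : ∀ T > (0:ℝ), ∃ M, 0 ≤ M ∧ ∀ s, 0 < s → s ≤ T → ‖B s‖ ≤ M * s ^ (-b))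
    {v : ℝ → X} (hvc : ContinuousOn v (Ioi 0)) {l K t : ℝ} (ht : 0 < t)
    (hv : ∀ s, 0 < s → s ≤ t → ‖v s‖ ≤ K * weight a l s) :
    IntegrableOn (fun τ => B (t - τ) (v τ)) (Ioo 0 t) := by
  obtain ⟨M, hM0, hMt⟩ := hM t ht
  refine Integrable.mono' ((integrableOn_kernel l t ha0 ha1 hb0 hb1).const_mul (M * K)) ?_
    ((ae_restrict_iff' measurableSet_Ioo).2 (Eventually.of_forall fun τ hτ =>
      norm_kernel_le hMt hM0 hv le_rfl hτ))
  refine ContinuousOn.aestronglyMeasurable (fun τ hτ => ?_) measurableSet_Ioo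
  exact (continuousAt_opFamily_apply hB hM (by fun_prop)
    (hvc.continuousAt (Ioi_mem_nhds hτ.1)) (sub_pos.2 hτ.2)).continuousWithinAt

/-- The Duhamel operator preserves continuity on `(0, ∞)`. After rescaling to the fixed interval
`(0, 1)` the integrand is continuous in `t` for each value of the integration variable, and is
dominated locally uniformly in `t`. -/
lemma continuousOn_duhamel (ha0 : 0 ≤ a) (ha1 : a < 1) (hd0 : ∀ i, 0 ≤ d i) (hd1 : ∀ i, d i < 1)
    (hA : ∀ i y, ContinuousOn (fun t => A i t y) (Ioi 0))
    (hM : ∀ T > (0:ℝ), ∃ M, 0 ≤ M ∧ ∀ i s, 0 < s → s ≤ T → ‖A i s‖ ≤ M * s ^ (-(d i)))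
    {v : ℝ → X} (hvc : ContinuousOn v (Ioi 0))
    (hv : ∀ T > (0:ℝ), ∃ l K, 0 ≤ l ∧ 0 ≤ K ∧
      ∀ t, 0 < t → t ≤ T → ‖v t‖ ≤ K * weight a l t) :
    ContinuousOn (duhamel A v) (Ioi 0) := by
  unfold duhamel
  refine continuousOn_finsetSum _ fun i _ => ?_
  have hMi : ∀ T > (0:ℝ), ∃ M, 0 ≤ M ∧ ∀ s, 0 < s → s ≤ T → ‖A i s‖ ≤ M * s ^ (-(d i)) :=
    fun T hT => (hM T hT).imp fun M h => ⟨h.1, h.2 i⟩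
  have hscale : ∀ t ∈ Ioi (0:ℝ), ∫ τ in Ioo (0:ℝ) t, A i (t - τ) (v τ) =
      t • ∫ s in Ioo (0:ℝ) 1, A i (t - t * s) (v (t * s)) := by
    intro t ht
    have ht : 0 < t := ht
    rw [← integral_Ioc_eq_integral_Ioo, ← integral_Ioc_eq_integral_Ioo,
      ← intervalIntegral.integral_of_le ht.le, ← intervalIntegral.integral_of_le zero_le_one,
      intervalIntegral.smul_integral_comp_mul_left (fun τ => A i (t - τ) (v τ)) t]
    simp
  refine ContinuousOn.congr ?_ hscale
  refine continuousOn_id.smul fun t₀ ht₀ => ContinuousAt.continuousWithinAt ?_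
  have ht₀ : 0 < t₀ := ht₀
  obtain ⟨M, hM0, hMT⟩ := hMi (2 * t₀) (by positivity)
  obtain ⟨l, K, hl0, hK0, hvT⟩ := hv (2 * t₀) (by positivity)
  have hnhds : ∀ᶠ t in 𝓝 t₀, t ∈ Ioo (t₀ / 2) (2 * t₀) :=
    Ioo_mem_nhds (by linarith) (by linarith)
  have hcont : ∀ t > 0, ∀ s ∈ Ioo (0:ℝ) 1, 0 < t * s ∧ 0 < t - t * s := fun t ht s hs =>
    ⟨mul_pos ht hs.1, by nlinarith [hs.2]⟩
  refine continuousAt_of_dominated (bound := fun s => M * K * ((t₀ / 2) ^ (-(d i)) *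
    (t₀ / 2) ^ (-a)) * ((1 - s) ^ (-(d i)) * weight a (l * (2 * t₀)) s)) ?_ ?_ ?_ ?_
  · filter_upwards [hnhds] with t ht
    have ht0 : 0 < t := by linarith [ht.1]
    refine ContinuousOn.aestronglyMeasurable (fun s hs => ?_) measurableSet_Ioo
    refine (continuousAt_opFamily_apply (f := fun s => t - t * s) (g := fun s => v (t * s)) (hA i)
      hMi (by fun_prop) ?_ (hcont t ht0 s hs).2).continuousWithinAt
    exact ContinuousAt.comp' (f := fun s => t * s)
      (hvc.continuousAt (Ioi_mem_nhds (hcont t ht0 s hs).1)) (by fun_prop)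
  · filter_upwards [hnhds] with t ht
    have ht0 : 0 < t := by linarith [ht.1]
    refine (ae_restrict_iff' measurableSet_Ioo).2 (Eventually.of_forall fun s hs => ?_)
    obtain ⟨h1, h2⟩ := hcont t ht0 s hs
    have h1s : 0 < 1 - s := sub_pos.2 hs.2
    have hs0 : 0 < s := hs.1
    have e1 : (t - t * s) ^ (-(d i)) ≤ (t₀ / 2) ^ (-(d i)) * (1 - s) ^ (-(d i)) := by
      rw [← Real.mul_rpow (by linarith) h1s.le]
      refine Real.rpow_le_rpow_of_nonpos (by positivity) ?_ (by linarith [hd0 i])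
      nlinarith [ht.1]
    have e2 : weight a l (t * s) ≤ (t₀ / 2) ^ (-a) * weight a (l * (2 * t₀)) s := by
      unfold weight
      rw [← mul_assoc ((t₀ / 2) ^ (-a)), ← Real.mul_rpow (by linarith : 0 ≤ t₀ / 2) hs0.le]
      refine mul_le_mul ?_ ?_ (Real.exp_pos _).le (by positivity)
      · refine Real.rpow_le_rpow_of_nonpos (by positivity) ?_ (by linarith)
        nlinarith [ht.1]
      · refine Real.exp_le_exp.2 ?_
        rw [mul_assoc]
        have := ht.2
        gcongr
    have hw := (weight_pos (a := a) (l := l) h1).le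
    calc _ ≤ M * K * ((t - t * s) ^ (-(d i)) * weight a l (t * s)) :=
          norm_kernel_le hMT hM0 hvT ht.2.le ⟨h1, by linarith⟩
      _ ≤ M * K * (((t₀ / 2) ^ (-(d i)) * (1 - s) ^ (-(d i))) *
            ((t₀ / 2) ^ (-a) * weight a (l * (2 * t₀)) s)) := by gcongr
      _ = _ := by ring
  · exact (integrableOn_kernel _ 1 ha0 ha1 (hd0 i) (hd1 i)).const_mul _
  · refine (ae_restrict_iff' measurableSet_Ioo).2 (Eventually.of_forall fun s hs => ?_)
    obtain ⟨h1, h2⟩ := hcont t₀ ht₀ s hs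
    refine continuousAt_opFamily_apply (hA i) hMi (by fun_prop) ?_ h2
    exact ContinuousAt.comp' (f := fun t => t * s)
      (hvc.continuousAt (Ioi_mem_nhds h1)) (by fun_prop)

/-- Solvability of `u = f + duhamel A u`: the Neumann series of `f` converges on every `(0, T]` in
a weighted norm in which the Duhamel operator is a contraction. The terms of the series do not
depend on `T`, so no gluing of local solutions is needed. -/
lemma exists_eq_add_duhamel [CompleteSpace X] (ha0 : 0 ≤ a) (ha1 : a < 1) (hd0 : ∀ i, 0 ≤ d i)
    (hd1 : ∀ i, d i < 1) (hA : ∀ i y, ContinuousOn (fun t => A i t y) (Ioi 0))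
    (hM : ∀ T > (0:ℝ), ∃ M, 0 ≤ M ∧ ∀ i s, 0 < s → s ≤ T → ‖A i s‖ ≤ M * s ^ (-(d i)))
    {f : ℝ → X} (hfc : ContinuousOn f (Ioi 0))
    (hf : ∀ T > (0:ℝ), ∃ K, 0 ≤ K ∧ ∀ t, 0 < t → t ≤ T → ‖f t‖ ≤ K * t ^ (-a)) :
    ∃ u : ℝ → X, ContinuousOn u (Ioi 0) ∧
      (∀ T > (0:ℝ), ∃ l K, ∀ t, 0 < t → t ≤ T → ‖u t‖ ≤ K * weight a l t) ∧
      ∀ t > 0, u t = f t + duhamel A u t := by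
  set v : ℕ → ℝ → X := fun k => (duhamel A)^[k] f with hv
  have hsucc : ∀ k, v (k + 1) = duhamel A (v k) := fun k => Function.iterate_succ_apply' _ _ _
  have hbd : ∀ T > (0:ℝ), ∃ l K, 0 ≤ l ∧ 0 ≤ K ∧ ∀ k t, 0 < t → t ≤ T →
      ‖v k t‖ ≤ K * (1 / 2) ^ k * weight a l t := by
    intro T hT
    obtain ⟨M, hM0, hMT⟩ := hM T hT
    obtain ⟨K, hK0, hK⟩ := hf T hT
    obtain ⟨l, hl0, hl⟩ := exists_rate_duhamel_le ha0 ha1 hd0 hd1 hM0 hMT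
    refine ⟨l, K, hl0, hK0, fun k => ?_⟩
    induction k with
    | zero =>
      intro t ht htT
      refine (hK t ht htT).trans ?_
      simpa using mul_le_mul_of_nonneg_left (rpow_neg_le_weight hl0 ht) hK0
    | succ k ih =>
      intro t ht htT
      rw [hsucc]
      refine (hl _ _ (by positivity) ih t ht htT).trans (le_of_eq ?_)
      ring
  have hvc : ∀ k, ContinuousOn (v k) (Ioi 0) := by
    intro k
    induction k with
    | zero => exact hfc
    | succ k ih =>
      rw [hsucc]
      refine continuousOn_duhamel ha0 ha1 hd0 hd1 hA hM ih fun T hT => ?_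
      obtain ⟨l, K, hl0, hK0, h⟩ := hbd T hT
      exact ⟨l, K * (1 / 2) ^ k, hl0, by positivity, h k⟩
  have hgeo : ∀ C w : ℝ, Summable fun k : ℕ => C * (1 / 2) ^ k * w := fun C w =>
    (summable_geometric_two.mul_left C).mul_right w
  have hsum : ∀ t > 0, Summable fun k => v k t := by
    intro t ht
    obtain ⟨l, K, -, -, h⟩ := hbd t ht
    exact Summable.of_norm_bounded (hgeo K (weight a l t)) fun k => h k t ht le_rfl
  refine ⟨fun t => ∑' k, v k t, ?_, ?_, ?_⟩
  · intro t₀ ht₀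
    have ht₀ : 0 < t₀ := ht₀
    obtain ⟨l, K, hl0, hK0, h⟩ := hbd (2 * t₀) (by positivity)
    have hloc : ContinuousOn (fun t => ∑' k, v k t) (Ioo (t₀ / 2) (2 * t₀)) := by
      refine continuousOn_tsum
        (fun k => (hvc k).mono fun t ht => lt_trans (by positivity) ht.1)
        (hgeo K ((t₀ / 2) ^ (-a) * Real.exp (l * (2 * t₀)))) fun k t ht => ?_
      refine (h k t (by linarith [ht.1]) ht.2.le).trans ?_
      unfold weight
      have e1 : t ^ (-a) ≤ (t₀ / 2) ^ (-a) :=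
        Real.rpow_le_rpow_of_nonpos (by positivity) ht.1.le (by linarith)
      have := ht.2
      gcongr
    exact (hloc.continuousAt (Ioo_mem_nhds (by linarith) (by linarith))).continuousWithinAt
  · intro T hT
    obtain ⟨l, K, -, -, h⟩ := hbd T hT
    refine ⟨l, K * 2, fun t ht htT => ?_⟩
    exact tsum_of_norm_bounded ((hasSum_geometric_two.mul_left K).mul_right (weight a l t))
      fun k => h k t ht htT
  · intro t ht
    obtain ⟨l, K, hl0, hK0, h⟩ := hbd t ht
    obtain ⟨M, hM0, hMt⟩ := hM t ht
    have hterm : ∀ i, HasSum (fun k => ∫ τ in Ioo 0 t, A i (t - τ) (v k τ))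
        (∫ τ in Ioo 0 t, A i (t - τ) (∑' k, v k τ)) := by
      intro i
      have hMi : ∀ T > (0:ℝ), ∃ M, 0 ≤ M ∧ ∀ s, 0 < s → s ≤ T → ‖A i s‖ ≤ M * s ^ (-(d i)) :=
        fun T hT => (hM T hT).imp fun M h => ⟨h.1, h.2 i⟩
      have hint := fun k => integrableOn_duhamel ha0 ha1 (hd0 i) (hd1 i) (hA i) hMi (hvc k) ht (h k)
      have hs : Summable fun k => ∫ τ in Ioo 0 t, ‖A i (t - τ) (v k τ)‖ := by
        refine Summable.of_nonneg_of_le (fun k => integral_nonneg fun _ => norm_nonneg _)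
          (fun k => ?_) (hgeo (M * K) (∫ τ in Ioo 0 t, (t - τ) ^ (-(d i)) * weight a l τ))
        rw [← integral_const_mul]
        refine setIntegral_mono_on (hint k).norm
          ((integrableOn_kernel l t ha0 ha1 (hd0 i) (hd1 i)).const_mul _) measurableSet_Ioo
          fun τ hτ => ?_
        refine (norm_kernel_le (hMt i) hM0 (h k) le_rfl hτ).trans (le_of_eq ?_)
        ring
      have := hasSum_integral_of_summable_integral_norm hint hs
      rwa [setIntegral_congr_fun measurableSet_Ioo fun τ hτ =>
        ((A i (t - τ)).map_tsum (hsum τ hτ.1)).symm] at this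
    have hD : HasSum (fun k => v (k + 1) t) (duhamel A (fun t => ∑' k, v k t) t) := by
      simp only [hsucc, duhamel]
      exact hasSum_sum fun i _ => hterm i
    rw [← hD.tsum_eq]
    exact (hsum t ht).tsum_eq_zero_add

end Duhamel

/-! ### Mild solutions -/

section MildSolution

variable {n : ℕ} {Xγ Xα : Type*}
  [NormedAddCommGroup Xγ] [NormedSpace ℝ Xγ] [NormedAddCommGroup Xα] [NormedSpace ℝ Xα]
  {Xβ : Fin n → Type*} [∀ i, NormedAddCommGroup (Xβ i)] [∀ i, NormedSpace ℝ (Xβ i)]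
  {Sγα : ℝ → Xγ →L[ℝ] Xα} {S : (i : Fin n) → ℝ → (Xβ i →L[ℝ] Xα)}
  {P : (i : Fin n) → Xα →L[ℝ] Xβ i} {dγ : ℝ} {d : Fin n → ℝ}

lemma IsMildSolution.smul_add {u₀ v₀ : Xγ} {u v : ℝ → Xα} (c : ℝ)
    (hu : IsMildSolution Sγα S P dγ u₀ u) (hv : IsMildSolution Sγα S P dγ v₀ v) :
    IsMildSolution Sγα S P dγ (c • u₀ + v₀) (fun t => c • u t + v t) := by
  obtain ⟨hu1, hu2, hu3⟩ := hu
  obtain ⟨hv1, hv2, hv3⟩ := hv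
  refine ⟨(hu1.const_smul c).add hv1, fun T hT => ?_, fun t ht => ?_⟩
  · obtain ⟨K, hK⟩ := hu2 T hT
    obtain ⟨L, hL⟩ := hv2 T hT
    refine ⟨|c| * K + L, fun t ht htT => ?_⟩
    have hp : 0 ≤ t ^ dγ := Real.rpow_nonneg ht.le _
    calc t ^ dγ * ‖c • u t + v t‖ ≤ t ^ dγ * (|c| * ‖u t‖ + ‖v t‖) := by
          gcongr
          exact (norm_add_le _ _).trans_eq (by rw [norm_smul, Real.norm_eq_abs])
      _ = |c| * (t ^ dγ * ‖u t‖) + t ^ dγ * ‖v t‖ := by ring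
      _ ≤ _ := by
          gcongr
          · exact hK t ht htT
          · exact hL t ht htT
  · obtain ⟨hui, hue⟩ := hu3 t ht
    obtain ⟨hvi, hve⟩ := hv3 t ht
    simp only [map_add, map_smul]
    refine ⟨fun i => ((hui i).smul c).add (hvi i), ?_⟩
    have : ∀ i, ∫ τ in Ioo (0:ℝ) t, (c • S i (t - τ) (P i (u τ)) + S i (t - τ) (P i (v τ))) =
        c • (∫ τ in Ioo (0:ℝ) t, S i (t - τ) (P i (u τ))) +
          ∫ τ in Ioo (0:ℝ) t, S i (t - τ) (P i (v τ)) := fun i =>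
      (integral_add ((hui i).smul c) (hvi i)).trans (congrArg (· + _) (integral_smul c _))
    simp only [this]
    rw [hue, hve, Finset.sum_add_distrib, ← Finset.smul_sum, _root_.smul_add]
    abel

/-- A priori estimate: the weighted sup norm `N` of a mild solution is finite by definition and
satisfies `N ≤ M * ‖u₀‖ + N / 2`, so that it is at most `2 * M * ‖u₀‖`. -/
lemma exists_norm_mildSolution_le (h0 : 0 ≤ dγ) (h1 : dγ < 1) (hd0 : ∀ i, 0 ≤ d i)
    (hd1 : ∀ i, d i < 1) {T M L : ℝ} (hT : 0 < T) (hM0 : 0 ≤ M) (hL0 : 0 ≤ L)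
    (hM : ∀ t, 0 < t → t ≤ T → ‖Sγα t‖ ≤ M * t ^ (-dγ))
    (hL : ∀ i s, 0 < s → s ≤ T → ‖S i s ∘L P i‖ ≤ L * s ^ (-(d i))) :
    ∃ M' : ℝ, ∀ (u₀ : Xγ) (u : ℝ → Xα), IsMildSolution Sγα S P dγ u₀ u →
      ∀ t : ℝ, 0 < t → t ≤ T → ‖u t‖ ≤ M' * t ^ (-dγ) * ‖u₀‖ := by
  obtain ⟨l, hl0, hl⟩ := exists_rate_duhamel_le (A := fun i s => S i s ∘L P i) h0 h1 hd0 hd1 hL0 hL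
  refine ⟨2 * M * Real.exp (l * T), fun u₀ u hu t ht htT => ?_⟩
  obtain ⟨-, hu2, hu3⟩ := hu
  obtain ⟨K, hK⟩ := hu2 T hT
  set Q : Set ℝ := (fun s => ‖u s‖ / weight dγ l s) '' Ioc 0 T with hQ
  have hne : Q.Nonempty := ⟨_, mem_image_of_mem _ ⟨ht, htT⟩⟩
  have hbdd : BddAbove Q := by
    refine ⟨K, ?_⟩
    rintro _ ⟨s, hs, rfl⟩
    have h2 : ‖u s‖ / weight dγ l s ≤ ‖u s‖ / s ^ (-dγ) :=
      div_le_div_of_nonneg_left (norm_nonneg _) (Real.rpow_pos_of_pos hs.1 _)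
        (rpow_neg_le_weight hl0 hs.1)
    refine h2.trans (le_of_eq_of_le ?_ (hK s hs.1 hs.2))
    rw [Real.rpow_neg hs.1.le, div_inv_eq_mul, mul_comm]
  have hN : ∀ s, 0 < s → s ≤ T → ‖u s‖ ≤ sSup Q * weight dγ l s := fun s hs hsT =>
    (div_le_iff₀ (weight_pos hs)).1 (le_csSup hbdd (mem_image_of_mem _ ⟨hs, hsT⟩))
  have hN0 : 0 ≤ sSup Q :=
    (div_nonneg (norm_nonneg _) (weight_pos ht).le).trans
      (le_csSup hbdd (mem_image_of_mem _ ⟨ht, htT⟩))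
  have hself : sSup Q ≤ M * ‖u₀‖ + sSup Q / 2 := by
    refine csSup_le hne ?_
    rintro _ ⟨s, hs, rfl⟩
    have hw := weight_pos (a := dγ) (l := l) hs.1
    refine (div_le_iff₀ hw).2 ?_
    have hS : ‖Sγα s u₀‖ ≤ M * ‖u₀‖ * weight dγ l s :=
      calc ‖Sγα s u₀‖ ≤ ‖Sγα s‖ * ‖u₀‖ := (Sγα s).le_opNorm _
        _ ≤ M * weight dγ l s * ‖u₀‖ := by
            gcongr
            refine (hM s hs.1 hs.2).trans ?_
            gcongr
            exact rpow_neg_le_weight hl0 hs.1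
        _ = _ := by ring
    calc ‖u s‖ = ‖Sγα s u₀ + duhamel (fun i s => S i s ∘L P i) u s‖ :=
          congrArg norm (hu3 s hs.1).2
      _ ≤ M * ‖u₀‖ * weight dγ l s + sSup Q / 2 * weight dγ l s :=
          (norm_add_le _ _).trans (add_le_add hS (hl u _ hN0 hN s hs.1 hs.2))
      _ = _ := by ring
  calc ‖u t‖ ≤ sSup Q * weight dγ l t := hN t ht htT
    _ ≤ 2 * M * ‖u₀‖ * (t ^ (-dγ) * Real.exp (l * T)) := by
        unfold weight
        have : 0 ≤ t ^ (-dγ) := Real.rpow_nonneg ht.le _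
        gcongr
        linarith
    _ = _ := by ring

end MildSolution

/-- Existence, uniqueness, continuity, linearity in the initial datum and the
basic singular estimate for mild solutions of the abstract linearly perturbed
problem in a scale of Banach spaces. -/
theorem existence_uniqueness_mild_solutions
    {n : ℕ} (hn : 0 < n)
    {Xγ Xα : Type*}
    [NormedAddCommGroup Xγ] [NormedSpace ℝ Xγ] [CompleteSpace Xγ]
    [NormedAddCommGroup Xα] [NormedSpace ℝ Xα] [CompleteSpace Xα]
    {Xβ : Fin n → Type*} [∀ i, NormedAddCommGroup (Xβ i)]
    [∀ i, NormedSpace ℝ (Xβ i)] [∀ i, CompleteSpace (Xβ i)]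
    (Sγα : ℝ → Xγ →L[ℝ] Xα)
    (S : (i : Fin n) → ℝ → (Xβ i →L[ℝ] Xα))
    (hScont : ∀ x : Xγ, ContinuousOn (fun t => (Sγα t) x) (Ioi 0))
    (hSicont : ∀ i (y : Xβ i), ContinuousOn (fun t => (S i t) y) (Ioi 0))
    (dγ : ℝ) (hdγ0 : 0 ≤ dγ) (hdγ1 : dγ < 1)
    (d : Fin n → ℝ) (hd0 : ∀ i, 0 ≤ d i) (hd1 : ∀ i, d i < 1)
    (hbound : ∀ T > (0:ℝ), ∃ M : ℝ,
      (∀ t : ℝ, 0 < t → t ≤ T → ‖Sγα t‖ ≤ M * t ^ (-dγ)) ∧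
      (∀ i, ∀ t : ℝ, 0 < t → t ≤ T → ‖S i t‖ ≤ M * t ^ (-(d i))))
    (P : (i : Fin n) → Xα →L[ℝ] Xβ i) :
    (∀ u₀ : Xγ, ∃ u : ℝ → Xα,
        IsMildSolution Sγα S P dγ u₀ u ∧ ContinuousOn u (Ioi 0)) ∧
    (∀ (u₀ : Xγ) (u v : ℝ → Xα), IsMildSolution Sγα S P dγ u₀ u →
        IsMildSolution Sγα S P dγ u₀ v → ∀ t > (0:ℝ), u t = v t) ∧
    (∀ (u₀ v₀ : Xγ) (c : ℝ) (u v w : ℝ → Xα),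
        IsMildSolution Sγα S P dγ u₀ u → IsMildSolution Sγα S P dγ v₀ v →
        IsMildSolution Sγα S P dγ (c • u₀ + v₀) w →
        ∀ t > (0:ℝ), w t = c • u t + v t) ∧
    (∀ T > (0:ℝ), ∃ M' : ℝ, ∀ (u₀ : Xγ) (u : ℝ → Xα),
        IsMildSolution Sγα S P dγ u₀ u →
        ∀ t : ℝ, 0 < t → t ≤ T → ‖u t‖ ≤ M' * t ^ (-dγ) * ‖u₀‖) := by
  -- absorb `P i` into the operator families, and arrange one nonnegative constant for all `i`
  have hM : ∀ T > (0:ℝ), ∃ M, 0 ≤ M ∧ (∀ t, 0 < t → t ≤ T → ‖Sγα t‖ ≤ M * t ^ (-dγ)) ∧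
      ∀ i s, 0 < s → s ≤ T → ‖S i s ∘L P i‖ ≤ (M * ∑ j, ‖P j‖) * s ^ (-(d i)) := by
    intro T hT
    obtain ⟨M, h1, h2⟩ := hbound T hT
    have hM0 : 0 ≤ M := nonneg_of_mul_nonneg_left ((norm_nonneg _).trans (h1 T hT le_rfl))
      (Real.rpow_pos_of_pos hT _)
    refine ⟨M, hM0, h1, fun i s hs hsT => ?_⟩
    have hp := Real.rpow_nonneg hs.le (-(d i))
    calc ‖S i s ∘L P i‖ ≤ ‖S i s‖ * ‖P i‖ := ContinuousLinearMap.opNorm_comp_le _ _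
      _ ≤ (M * s ^ (-(d i))) * ∑ j, ‖P j‖ := by
          gcongr
          · exact h2 i s hs hsT
          · exact Finset.single_le_sum (f := fun j => ‖P j‖) (fun j _ => norm_nonneg _)
              (Finset.mem_univ i)
      _ = _ := by ring
  have hA : ∀ i y, ContinuousOn (fun t => (S i t ∘L P i) y) (Ioi 0) := fun i y => hSicont i (P i y)
  have hAM : ∀ T > (0:ℝ), ∃ M, 0 ≤ M ∧
      ∀ i s, 0 < s → s ≤ T → ‖S i s ∘L P i‖ ≤ M * s ^ (-(d i)) := fun T hT => by
    obtain ⟨M, hM0, -, h⟩ := hM T hT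
    exact ⟨_, mul_nonneg hM0 (Finset.sum_nonneg fun j _ => norm_nonneg _), h⟩
  have hest : ∀ T > (0:ℝ), ∃ M' : ℝ, ∀ (u₀ : Xγ) (u : ℝ → Xα),
      IsMildSolution Sγα S P dγ u₀ u →
        ∀ t : ℝ, 0 < t → t ≤ T → ‖u t‖ ≤ M' * t ^ (-dγ) * ‖u₀‖ := fun T hT => by
    obtain ⟨M, hM0, h1, h2⟩ := hM T hT
    exact exists_norm_mildSolution_le hdγ0 hdγ1 hd0 hd1 hT hM0
      (mul_nonneg hM0 (Finset.sum_nonneg fun j _ => norm_nonneg _)) h1 h2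
  have huniq : ∀ (u₀ : Xγ) (u v : ℝ → Xα), IsMildSolution Sγα S P dγ u₀ u →
      IsMildSolution Sγα S P dγ u₀ v → ∀ t > (0:ℝ), u t = v t := by
    intro u₀ u v hu hv t ht
    obtain ⟨M', h⟩ := hest t ht
    -- the difference is a mild solution with zero initial datum
    have := h _ _ (hu.smul_add (-1) hv) t ht le_rfl
    simp only [neg_smul, one_smul, neg_add_cancel, norm_zero, mul_zero, norm_le_zero_iff] at this
    exact neg_add_eq_zero.1 this
  refine ⟨fun u₀ => ?_, huniq, fun u₀ v₀ c u v w hu hv hw =>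
    huniq _ _ _ hw (hu.smul_add c hv), hest⟩
  obtain ⟨u, huc, hub, hue⟩ := exists_eq_add_duhamel (A := fun i s => S i s ∘L P i)
    hdγ0 hdγ1 hd0 hd1 hA hAM (hScont u₀) fun T hT => by
      obtain ⟨M, hM0, h1, -⟩ := hM T hT
      refine ⟨M * ‖u₀‖, by positivity, fun t ht htT => ?_⟩
      calc ‖Sγα t u₀‖ ≤ ‖Sγα t‖ * ‖u₀‖ := (Sγα t).le_opNorm _
        _ ≤ M * t ^ (-dγ) * ‖u₀‖ := by gcongr; exact h1 t ht htT
        _ = _ := by ring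
  refine ⟨u, ⟨huc.aestronglyMeasurable measurableSet_Ioi, fun T hT => ?_, fun t ht => ?_⟩, huc⟩
  · obtain ⟨l, K, h⟩ := hub T hT
    refine ⟨|K| * Real.exp (|l| * T), fun t ht htT => ?_⟩
    have hp := Real.rpow_pos_of_pos ht dγ
    calc t ^ dγ * ‖u t‖ ≤ t ^ dγ * (|K| * weight dγ l t) := by
          have := (weight_pos (a := dγ) (l := l) ht).le
          gcongr
          refine (h t ht htT).trans ?_
          gcongr
          exact le_abs_self K
      _ = |K| * Real.exp (l * t) := by
          rw [weight, Real.rpow_neg ht.le]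
          field_simp
      _ ≤ _ := by
          gcongr
          exact le_abs_self l
  · obtain ⟨l, K, h⟩ := hub t ht
    refine ⟨fun i => ?_, hue t ht⟩
    exact integrableOn_duhamel (B := fun s => S i s ∘L P i) hdγ0 hdγ1 (hd0 i) (hd1 i) (hA i)
      (fun T hT => (hAM T hT).imp fun M h => ⟨h.1, h.2 i⟩) huc ht h
end

section
/- (Exponential bound for the perturbed semigroup in terms of the size of the perturbation.) Let u₀ ∈ X and let u : (0,∞) → X be strongly measurable with sup_{0<t≤T} ‖u(t)‖ < ∞ for every T > 0, satisfying u(t) = S_X(t)u₀ + ∫_0^t S_{YX}(t−s) P u(s) ds for all t > 0. Then there exists a constant M, depending only on C and d (and not on P, u₀ or a), such that ‖u(t)‖_X ≤ M ‖u₀‖_X e^{(a+θ) t} for all t > 0, where θ := (C Γ(1−d) ‖P‖_{L(X,Y)})^{1/(1−d)}. -/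
open MeasureTheory Set

/-!
After removing the factor `e^{at}`, the norm of `u` satisfies the scalar Volterra inequality
`v(t) ≤ A + c ∫₀ᵗ (t-s)^{-d} v(s) ds` with `A = C‖u₀‖` and `c = C‖P‖` (`norm_step`).  The number
`θ` is chosen so that `c ∫₀^∞ r^{-d} e^{-θr} dr = 1`, which is the critical case: the pure
exponential `e^{θt}` falls short of being a supersolution when `d > 0`, since it gains only the
kernel tail `c e^{θt} ∫ₜ^∞ r^{-d} e^{-θr} dr`, which tends to zero as `t → ∞`.

The remedy is to use `ψ(t) = M e^{θt} - 1`.  The term `-1` contributes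
`c ∫₀ᵗ (t-s)^{-d} ds = (θt)^{1-d} / ((1-d) Γ(1-d))`, which is at least `2` once `θt ≥ T₀` for some
`T₀` depending only on `d`; for `θt ≤ T₀` the kernel tail is bounded below, so that a large `M`
depending only on `d` suffices (`exists_supersolution`).

For the comparison `v ≤ A ψ`, the kernel weighted with `e^{2θt}` has mass at most `2^{-(1-d)} < 1`
(`kernel_contraction`).  Hence a bound `v ≤ A ψ + B e^{2θt}` on `(0, T]`, which holds for some `B`
because `u` is bounded there, improves itself to `v ≤ A ψ + 2^{-(1-d)} B e^{2θt}`; iterating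
removes the second term.
-/

theorem kernel_intervalIntegrable {d : ℝ} (hd1 : d < 1) (t μ : ℝ) :
    IntervalIntegrable (fun s => (t - s) ^ (-d) * Real.exp (μ * s)) volume 0 t := by
  have h : IntervalIntegrable (fun r : ℝ => r ^ (-d)) volume t 0 :=
    intervalIntegral.intervalIntegrable_rpow' (by linarith)
  have h2 := h.comp_sub_left t
  simp only [sub_self, sub_zero] at h2
  exact h2.mul_continuousOn (by fun_prop)

theorem tail_integrableOn {d μ : ℝ} (hd1 : d < 1) (hμ : 0 < μ) :
    IntegrableOn (fun r : ℝ => r ^ (-d) * Real.exp (-(μ * r))) (Ioi 0) := by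
  have h := integrableOn_rpow_mul_exp_neg_mul_rpow (s := -d) (p := 1) (b := μ)
    (by linarith) one_pos hμ
  simpa using h

/-- The convolution of `r^{-d}` with `e^{μs}`, through the complete integral minus its tail. -/
theorem kernel_exp {d μ t : ℝ} (hd1 : d < 1) (hμ : 0 < μ) (ht : 0 < t) :
    ∫ s in (0:ℝ)..t, (t - s) ^ (-d) * Real.exp (μ * s) =
      Real.exp (μ * t) * ((1 / μ) ^ (1 - d) * Real.Gamma (1 - d) -
        ∫ r in Ioi t, r ^ (-d) * Real.exp (-(μ * r))) := by
  have hint := tail_integrableOn hd1 hμ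
  have hsplit : (∫ r in (0:ℝ)..t, r ^ (-d) * Real.exp (-(μ * r))) +
      ∫ r in Ioi t, r ^ (-d) * Real.exp (-(μ * r)) =
      (1 / μ) ^ (1 - d) * Real.Gamma (1 - d) := by
    rw [← Real.integral_rpow_mul_exp_neg_mul_Ioi (by linarith) hμ,
      intervalIntegral.integral_of_le ht.le, ← setIntegral_union (Ioc_disjoint_Ioi le_rfl)
        measurableSet_Ioi (hint.mono_set Ioc_subset_Ioi_self)
        (hint.mono_set (Ioi_subset_Ioi ht.le)), Ioc_union_Ioi_eq_Ioi ht.le]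
    congr 1
    ext r
    congr 2
    ring
  rw [← hsplit, add_sub_cancel_right, ← intervalIntegral.integral_const_mul]
  have h := intervalIntegral.integral_comp_sub_left (a := 0) (b := t)
    (fun r => Real.exp (μ * t) * (r ^ (-d) * Real.exp (-(μ * r)))) t
  simp only [sub_self, sub_zero] at h
  rw [← h]
  congr 1
  ext s
  rw [mul_left_comm, ← Real.exp_add]
  congr 2
  ring

theorem kernel_one {d : ℝ} (hd1 : d < 1) (t : ℝ) :
    ∫ s in (0:ℝ)..t, (t - s) ^ (-d) = t ^ (1 - d) / (1 - d) := by
  have h := intervalIntegral.integral_comp_sub_left (a := 0) (b := t)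
    (fun r : ℝ => r ^ (-d)) t
  simp only [sub_self, sub_zero] at h
  rw [h, integral_rpow (Or.inl (by linarith)), Real.zero_rpow (by linarith)]
  rw [show -d + 1 = 1 - d by ring, sub_zero]

/-- Scaling `r ↦ θ r` in the kernel tail, together with monotonicity in the left endpoint. -/
theorem tail_lower {d θ t T : ℝ} (hd1 : d < 1) (hθ : 0 < θ) (ht : 0 < t) (hT : θ * t ≤ T) :
    (1 / θ) ^ (1 - d) * ∫ x in Ioi T, x ^ (-d) * Real.exp (-x) ≤
      ∫ r in Ioi t, r ^ (-d) * Real.exp (-(θ * r)) := by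
  have htT : t ≤ T / θ := by rw [le_div_iff₀ hθ]; linarith
  have hint := (tail_integrableOn hd1 hθ).mono_set (Ioi_subset_Ioi ht.le)
  have hscale := integral_comp_mul_left_Ioi
    (fun x : ℝ => x ^ (-d) * Real.exp (-x)) (T / θ) hθ
  rw [mul_div_cancel₀ _ hθ.ne', smul_eq_mul] at hscale
  have hpow : ∫ r in Ioi (T / θ), (θ * r) ^ (-d) * Real.exp (-(θ * r)) =
      θ ^ (-d) * ∫ r in Ioi (T / θ), r ^ (-d) * Real.exp (-(θ * r)) := by
    rw [← integral_const_mul]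
    refine setIntegral_congr_fun measurableSet_Ioi fun r hr => ?_
    have hr0 : 0 < r := ht.trans_le (htT.trans (le_of_lt hr))
    simp only [Real.mul_rpow hθ.le hr0.le, mul_assoc]
  have hθd : (1 / θ) ^ (1 - d) = θ ^ d * θ⁻¹ := by
    rw [one_div, Real.inv_rpow hθ.le, ← Real.rpow_neg hθ.le, ← Real.rpow_neg_one θ,
      ← Real.rpow_add hθ]
    congr 1; ring
  have hone : θ ^ d * θ ^ (-d) = 1 := by
    rw [← Real.rpow_add hθ]; simp
  rw [hθd, mul_assoc, ← hscale, hpow, ← mul_assoc, hone, one_mul]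
  refine setIntegral_mono_set hint ?_ (Ioi_subset_Ioi htT).eventuallyLE
  refine ae_restrict_of_forall_mem measurableSet_Ioi fun r hr => ?_
  have hr0 : 0 < r := ht.trans hr
  simp only [Pi.zero_apply]
  positivity

theorem tail_pos {d T : ℝ} (hd1 : d < 1) (hT : 0 < T) :
    0 < ∫ x in Ioi T, x ^ (-d) * Real.exp (-x) := by
  have hint : IntegrableOn (fun x : ℝ => x ^ (-d) * Real.exp (-x)) (Ioi T) := by
    simpa using (tail_integrableOn hd1 one_pos).mono_set (Ioi_subset_Ioi hT.le)
  have hpos : ∀ x ∈ Ioi T, 0 < x ^ (-d) * Real.exp (-x) := fun x hx => by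
    have : 0 < x := hT.trans hx
    positivity
  rw [setIntegral_pos_iff_support_of_nonneg_ae
    (ae_restrict_of_forall_mem measurableSet_Ioi fun x hx => (hpos x hx).le) hint]
  have hsub : Ioi T ⊆ Function.support fun x : ℝ => x ^ (-d) * Real.exp (-x) :=
    fun x hx => (hpos x hx).ne'
  rw [inter_eq_self_of_subset_right hsub]
  simp

/-- `M e^{θt} - 1` is a supersolution of the Volterra equation with right-hand side `1`, with `M`
uniform over all critical pairs `(c, θ)`. -/
theorem exists_supersolution {d : ℝ} (hd1 : d < 1) :
    ∃ M : ℝ, 1 ≤ M ∧ ∀ θ c t : ℝ, 0 < θ → c * Real.Gamma (1 - d) = θ ^ (1 - d) → 0 < t →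
      1 + c * ∫ s in (0:ℝ)..t, (t - s) ^ (-d) * (M * Real.exp (θ * s) - 1) ≤
        M * Real.exp (θ * t) - 1 := by
  have hα : 0 < 1 - d := by linarith
  have hΓ := Real.Gamma_pos_of_pos hα
  -- the threshold beyond which the term `-1` alone produces the required gain
  set T : ℝ := (2 * (1 - d) * Real.Gamma (1 - d)) ^ (1 / (1 - d)) with hTdef
  have hT : 0 < T := by positivity
  have hTα : T ^ (1 - d) = 2 * (1 - d) * Real.Gamma (1 - d) := by
    rw [hTdef, ← Real.rpow_mul (by positivity), one_div_mul_cancel hα.ne', Real.rpow_one]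
  set κ : ℝ := ∫ x in Ioi T, x ^ (-d) * Real.exp (-x) with hκdef
  have hκ : 0 < κ := tail_pos hd1 hT
  have hM0 : 0 ≤ 2 * Real.Gamma (1 - d) / κ := by positivity
  refine ⟨2 * Real.Gamma (1 - d) / κ + 1, by linarith, fun θ c t hθ hc ht => ?_⟩
  set M : ℝ := 2 * Real.Gamma (1 - d) / κ + 1 with hM
  set R : ℝ := ∫ r in Ioi t, r ^ (-d) * Real.exp (-(θ * r)) with hR
  have hc0 : 0 < c := by
    have : 0 < c * Real.Gamma (1 - d) := by rw [hc]; positivity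
    exact pos_of_mul_pos_left this hΓ.le
  have hR0 : 0 ≤ R := setIntegral_nonneg measurableSet_Ioi fun r hr => by
    have : 0 < r := ht.trans hr
    positivity
  have hθinv : θ ^ (1 - d) * (1 / θ) ^ (1 - d) = 1 := by
    rw [← Real.mul_rpow hθ.le (by positivity), mul_one_div_cancel hθ.ne', Real.one_rpow]
  have hsplit : ∫ s in (0:ℝ)..t, (t - s) ^ (-d) * (M * Real.exp (θ * s) - 1) =
      M * (Real.exp (θ * t) * ((1 / θ) ^ (1 - d) * Real.Gamma (1 - d) - R)) -
        t ^ (1 - d) / (1 - d) := by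
    have h1 := kernel_intervalIntegrable hd1 t θ
    have h0 : IntervalIntegrable (fun s => (t - s) ^ (-d)) volume 0 t := by
      simpa using kernel_intervalIntegrable hd1 t 0
    rw [← kernel_exp hd1 hθ ht, ← kernel_one hd1 t, ← intervalIntegral.integral_const_mul,
      ← intervalIntegral.integral_sub (h1.const_mul M) h0]
    congr 1
    ext s
    ring
  have hgain : 2 ≤ M * Real.exp (θ * t) * (c * R) + c * (t ^ (1 - d) / (1 - d)) := by
    rcases le_total (θ * t) T with h | h
    · have hlow := tail_lower hd1 hθ ht h
      have hcR : κ / Real.Gamma (1 - d) ≤ c * R := by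
        rw [div_le_iff₀ hΓ]
        calc κ = (c * Real.Gamma (1 - d)) * ((1 / θ) ^ (1 - d) * κ) := by
              rw [hc, ← mul_assoc, hθinv, one_mul]
          _ ≤ (c * Real.Gamma (1 - d)) * R := by gcongr
          _ = c * R * Real.Gamma (1 - d) := by ring
      have h2 : 2 ≤ M * (κ / Real.Gamma (1 - d)) := by
        have : M * (κ / Real.Gamma (1 - d)) = 2 + κ / Real.Gamma (1 - d) := by
          rw [hM]; field_simp
        rw [this]
        linarith [div_pos hκ hΓ]
      have hM1 : 0 ≤ M := by linarith
      have hexp : M ≤ M * Real.exp (θ * t) :=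
        le_mul_of_one_le_right hM1 (Real.one_le_exp (by positivity))
      have h3 : M * (κ / Real.Gamma (1 - d)) ≤ M * Real.exp (θ * t) * (c * R) := by gcongr
      have h4 : 0 ≤ c * (t ^ (1 - d) / (1 - d)) := by positivity
      linarith
    · have hpow : 2 * (1 - d) * Real.Gamma (1 - d) ≤ θ ^ (1 - d) * t ^ (1 - d) := by
        rw [← hTα, ← Real.mul_rpow hθ.le ht.le]
        gcongr
      rw [← hc] at hpow
      have h2 : 2 ≤ c * (t ^ (1 - d) / (1 - d)) := by
        rw [← mul_div_assoc, le_div_iff₀ hα]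
        refine le_of_mul_le_mul_right ?_ hΓ
        linarith
      have hM1 : 0 ≤ M := by linarith
      have h4 : 0 ≤ M * Real.exp (θ * t) * (c * R) := by positivity
      linarith
  have hcrit : c * ((1 / θ) ^ (1 - d) * Real.Gamma (1 - d)) = 1 := by
    rw [mul_left_comm, hc, mul_comm, hθinv]
  rw [hsplit]
  linear_combination hgain + M * Real.exp (θ * t) * hcrit

theorem kernel_contraction {d θ c t : ℝ} (hd1 : d < 1) (hθ : 0 < θ) (hc0 : 0 ≤ c)
    (hc : c * Real.Gamma (1 - d) = θ ^ (1 - d)) (ht : 0 < t) :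
    c * ∫ s in (0:ℝ)..t, (t - s) ^ (-d) * Real.exp (2 * θ * s) ≤
      (1 / 2 : ℝ) ^ (1 - d) * Real.exp (2 * θ * t) := by
  rw [kernel_exp hd1 (by positivity) ht]
  have hR0 : 0 ≤ ∫ r in Ioi t, r ^ (-d) * Real.exp (-(2 * θ * r)) :=
    setIntegral_nonneg measurableSet_Ioi fun r hr => by
      have : 0 < r := ht.trans hr
      positivity
  have hmass : c * ((1 / (2 * θ)) ^ (1 - d) * Real.Gamma (1 - d)) = (1 / 2 : ℝ) ^ (1 - d) := by
    rw [mul_left_comm, hc, ← Real.mul_rpow (by positivity) hθ.le]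
    congr 1
    field_simp
  rw [← hmass]
  have : 0 ≤ c * Real.exp (2 * θ * t) *
    ∫ r in Ioi t, r ^ (-d) * Real.exp (-(2 * θ * r)) := by positivity
  linarith

/-- One application of the variation-of-constants formula: a bound `e^{as} G(s)` on `(0, t)` is
turned into the bound given by the scalar Volterra operator. -/
theorem norm_step {X Y : Type*} [NormedAddCommGroup X] [NormedSpace ℝ X]
    [NormedAddCommGroup Y] [NormedSpace ℝ Y] {C d a t : ℝ} (hC : 0 ≤ C) (ht : 0 < t)
    {SX : ℝ → X →L[ℝ] X} {SYX : ℝ → Y →L[ℝ] X} {P : X →L[ℝ] Y}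
    (hSX : ∀ t > (0:ℝ), ‖SX t‖ ≤ C * Real.exp (a * t))
    (hSYX : ∀ t > (0:ℝ), ‖SYX t‖ ≤ C * Real.exp (a * t) * t ^ (-d))
    {u₀ : X} {u : ℝ → X}
    (hu : u t = (SX t) u₀ + ∫ s in Ioo (0:ℝ) t, (SYX (t - s)) (P (u s)))
    {G : ℝ → ℝ} (hG : IntervalIntegrable (fun s => (t - s) ^ (-d) * G s) volume 0 t)
    (huG : ∀ s ∈ Ioo 0 t, ‖u s‖ ≤ Real.exp (a * s) * G s) :
    ‖u t‖ ≤ Real.exp (a * t) *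
      (C * ‖u₀‖ + C * ‖P‖ * ∫ s in (0:ℝ)..t, (t - s) ^ (-d) * G s) := by
  have h1 : ‖(SX t) u₀‖ ≤ C * Real.exp (a * t) * ‖u₀‖ :=
    ((SX t).le_opNorm u₀).trans (by gcongr; exact hSX t ht)
  have hint : IntegrableOn
      (fun s => Real.exp (a * t) * (C * ‖P‖) * ((t - s) ^ (-d) * G s)) (Ioo 0 t) :=
    (((intervalIntegrable_iff_integrableOn_Ioc_of_le ht.le).1 hG).mono_set
      Ioo_subset_Ioc_self).const_mul _
  have h2 : ‖∫ s in Ioo (0:ℝ) t, (SYX (t - s)) (P (u s))‖ ≤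
      ∫ s in Ioo (0:ℝ) t, Real.exp (a * t) * (C * ‖P‖) * ((t - s) ^ (-d) * G s) := by
    refine norm_integral_le_of_norm_le hint
      (ae_restrict_of_forall_mem measurableSet_Ioo fun s hs => ?_)
    have hts : 0 < t - s := by linarith [hs.2]
    have hP : ‖P (u s)‖ ≤ ‖P‖ * (Real.exp (a * s) * G s) :=
      (P.le_opNorm _).trans (by gcongr; exact huG s hs)
    calc ‖(SYX (t - s)) (P (u s))‖ ≤ ‖SYX (t - s)‖ * ‖P (u s)‖ := (SYX (t - s)).le_opNorm _
      _ ≤ (C * Real.exp (a * (t - s)) * (t - s) ^ (-d)) * (‖P‖ * (Real.exp (a * s) * G s)) := by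
          gcongr
          exact hSYX _ hts
      _ = Real.exp (a * t) * (C * ‖P‖) * ((t - s) ^ (-d) * G s) := by
          rw [show a * t = a * (t - s) + a * s by ring, Real.exp_add]
          ring
  rw [integral_const_mul] at h2
  rw [hu, intervalIntegral.integral_of_le ht.le, integral_Ioc_eq_integral_Ioo]
  refine (norm_add_le _ _).trans ?_
  linarith

/-- Exponential bound for the perturbed semigroup in terms of the size of the
perturbation: if `‖S_X(t)‖ ≤ C e^{at}`, `‖S_{YX}(t)‖ ≤ C e^{at} t^{-d}` and `u`
solves `u(t) = S_X(t)u₀ + ∫_0^t S_{YX}(t-s) P u(s) ds`, then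
`‖u(t)‖ ≤ M ‖u₀‖ e^{(a+θ)t}` with `θ = (C Γ(1-d) ‖P‖)^{1/(1-d)}`, where `M`
depends only on `C` and `d`. -/
theorem exponential_bound_perturbed_semigroup
    {X Y : Type*} [NormedAddCommGroup X] [NormedSpace ℝ X] [CompleteSpace X]
    [NormedAddCommGroup Y] [NormedSpace ℝ Y] [CompleteSpace Y]
    (C d : ℝ) (hC : 0 ≤ C) (hd0 : 0 ≤ d) (hd1 : d < 1) :
    ∃ M : ℝ, ∀ (a : ℝ) (SX : ℝ → X →L[ℝ] X) (SYX : ℝ → Y →L[ℝ] X)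
      (P : X →L[ℝ] Y),
      (∀ x : X, ContinuousOn (fun t => (SX t) x) (Ioi 0)) →
      (∀ y : Y, ContinuousOn (fun t => (SYX t) y) (Ioi 0)) →
      (∀ t > (0:ℝ), ‖SX t‖ ≤ C * Real.exp (a * t)) →
      (∀ t > (0:ℝ), ‖SYX t‖ ≤ C * Real.exp (a * t) * t ^ (-d)) →
      ∀ (u₀ : X) (u : ℝ → X),
        AEStronglyMeasurable u (volume.restrict (Ioi (0:ℝ))) →
        (∀ T > (0:ℝ), ∃ K : ℝ, ∀ t : ℝ, 0 < t → t ≤ T → ‖u t‖ ≤ K) →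
        (∀ t > (0:ℝ), u t = (SX t) u₀ +
            ∫ s in Ioo (0:ℝ) t, (SYX (t - s)) (P (u s))) →
        ∀ t > (0:ℝ),
          ‖u t‖ ≤ M * ‖u₀‖ *
            Real.exp ((a + (C * Real.Gamma (1 - d) * ‖P‖) ^ (1 / (1 - d))) * t) := by
  have hα : 0 < 1 - d := by linarith
  have hΓ := Real.Gamma_pos_of_pos hα
  obtain ⟨M, hM1, hM⟩ := exists_supersolution hd1
  refine ⟨C * M, fun a SX SYX P _ _ hSX hSYX u₀ u _ hbdd hu t ht => ?_⟩
  set c : ℝ := C * ‖P‖ with hcdef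
  have hc0 : 0 ≤ c := by positivity
  have hbase : C * Real.Gamma (1 - d) * ‖P‖ = c * Real.Gamma (1 - d) := by rw [hcdef]; ring
  set θ : ℝ := (C * Real.Gamma (1 - d) * ‖P‖) ^ (1 / (1 - d)) with hθdef
  have hθ0 : 0 ≤ θ := by positivity
  have hc : c * Real.Gamma (1 - d) = θ ^ (1 - d) := by
    rw [hθdef, hbase, ← Real.rpow_mul (by positivity), one_div_mul_cancel hα.ne', Real.rpow_one]
  obtain ⟨K, hK⟩ := hbdd t ht
  set A : ℝ := C * ‖u₀‖ with hA
  have hA0 : 0 ≤ A := by positivity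
  -- a bound for `e^{-as} ‖u s‖` on `(0, t]`
  set B : ℝ := |K| * Real.exp (|a| * t) with hB
  have hB0 : 0 ≤ B := by positivity
  have hstart : ∀ s, 0 < s → s ≤ t → ‖u s‖ ≤ Real.exp (a * s) * B := by
    intro s hs hst
    have h1 : 0 ≤ a * s + |a| * t := by
      have h2 : |a| * s ≤ |a| * t := by gcongr
      have h3 : 0 ≤ (a + |a|) * s := mul_nonneg (by linarith [neg_abs_le a]) hs.le
      linarith
    calc ‖u s‖ ≤ |K| := (hK s hs hst).trans (le_abs_self K)
      _ ≤ |K| * Real.exp (a * s + |a| * t) :=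
          le_mul_of_one_le_right (abs_nonneg K) (Real.one_le_exp h1)
      _ = Real.exp (a * s) * B := by rw [Real.exp_add, hB]; ring
  suffices hmain : ‖u t‖ ≤ Real.exp (a * t) * (A * (M * Real.exp (θ * t))) by
    refine hmain.trans (le_of_eq ?_)
    rw [add_mul, Real.exp_add, hA]
    ring
  rcases hθ0.eq_or_lt with hθ | hθ
  · -- here `C ‖P‖ = 0`, and the integral term vanishes
    have hc00 : c = 0 := by
      rw [← hθ, Real.zero_rpow hα.ne'] at hc
      exact (mul_eq_zero.1 hc).resolve_right hΓ.ne'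
    have hG : IntervalIntegrable (fun s => (t - s) ^ (-d) * B) volume 0 t := by
      simpa using (kernel_intervalIntegrable hd1 t 0).mul_const B
    have h := norm_step hC ht hSX hSYX (hu t ht) hG fun s hs => hstart s hs.1 hs.2.le
    rw [← hcdef, hc00, zero_mul, add_zero, ← hA] at h
    refine h.trans ?_
    rw [← hθ, zero_mul, Real.exp_zero, mul_one]
    gcongr
    exact le_mul_of_one_le_right hA0 hM1
  · set q : ℝ := (1 / 2 : ℝ) ^ (1 - d) with hq
    have hq0 : 0 ≤ q := by positivity
    have hq1 : q < 1 := Real.rpow_lt_one (by norm_num) (by norm_num) hα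
    have hiter : ∀ n : ℕ, ∀ s, 0 < s → s ≤ t →
        ‖u s‖ ≤ Real.exp (a * s) *
          (A * (M * Real.exp (θ * s) - 1) + q ^ n * B * Real.exp (2 * θ * s)) := by
      intro n
      induction n with
      | zero =>
        intro s hs hst
        refine (hstart s hs hst).trans ?_
        have h1 : 1 ≤ Real.exp (θ * s) := Real.one_le_exp (by positivity)
        have h2 : B ≤ B * Real.exp (2 * θ * s) :=
          le_mul_of_one_le_right hB0 (Real.one_le_exp (by positivity))
        have h3 : 0 ≤ A * (M * Real.exp (θ * s) - 1) := mul_nonneg hA0 (by nlinarith)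
        gcongr
        rw [pow_zero, one_mul]
        linarith
      | succ n ih =>
        intro s hs hst
        have i1 : IntervalIntegrable
            (fun r => (s - r) ^ (-d) * (M * Real.exp (θ * r) - 1)) volume 0 s := by
          have := ((kernel_intervalIntegrable hd1 s θ).const_mul M).sub
            (kernel_intervalIntegrable hd1 s 0)
          refine this.congr (fun r _ => ?_)
          simp only [zero_mul, Real.exp_zero]
          ring
        have i2 := kernel_intervalIntegrable hd1 s (2 * θ)
        have hfun : (fun r => (s - r) ^ (-d) *
            (A * (M * Real.exp (θ * r) - 1) + q ^ n * B * Real.exp (2 * θ * r))) =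
            fun r => A * ((s - r) ^ (-d) * (M * Real.exp (θ * r) - 1)) +
              q ^ n * B * ((s - r) ^ (-d) * Real.exp (2 * θ * r)) := by
          ext r; ring
        have h := norm_step hC hs hSX hSYX (hu s hs)
          (G := fun r => A * (M * Real.exp (θ * r) - 1) + q ^ n * B * Real.exp (2 * θ * r))
          (by rw [hfun]; exact (i1.const_mul A).add (i2.const_mul (q ^ n * B)))
          fun r hr => ih r hr.1 (hr.2.le.trans hst)
        refine h.trans ?_
        rw [hfun, intervalIntegral.integral_add (i1.const_mul A) (i2.const_mul (q ^ n * B)),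
          intervalIntegral.integral_const_mul, intervalIntegral.integral_const_mul,
          ← hcdef, ← hA]
        have e1 := mul_le_mul_of_nonneg_left (hM θ c s hθ hc hs) hA0
        have e2 := mul_le_mul_of_nonneg_left (kernel_contraction hd1 hθ hc0 hc hs)
          (by positivity : 0 ≤ q ^ n * B)
        refine mul_le_mul_of_nonneg_left ?_ (Real.exp_pos _).le
        rw [pow_succ]
        linarith
    have hlim : Filter.Tendsto (fun n : ℕ => Real.exp (a * t) *
          (A * (M * Real.exp (θ * t) - 1) + q ^ n * B * Real.exp (2 * θ * t))) Filter.atTop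
        (nhds (Real.exp (a * t) *
          (A * (M * Real.exp (θ * t) - 1) + 0 * B * Real.exp (2 * θ * t)))) :=
      ((((tendsto_pow_atTop_nhds_zero_of_lt_one hq0 hq1).mul_const B).mul_const _).const_add
        _).const_mul _
    refine (ge_of_tendsto' hlim fun n => hiter n t ht le_rfl).trans ?_
    gcongr
    linarith
end

section
/- (Uniqueness of the Laplace transform for exponentially bounded continuous vector-valued functions.) Let ω ∈ ℝ, M ≥ 0 and let χ : (0,∞) → X be continuous with ‖χ(t)‖ ≤ M e^{ω t} for all t > 0. If the Bochner integral ∫_0^∞ e^{λ t} χ(t) dt equals 0 for every real λ < −ω, then χ(t) = 0 for every t > 0. -/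
open MeasureTheory Set

/-!
Put `H t = e^{-(ω+1)t} χ t`, which is integrable on `(0,∞)`. The hypothesis at `λ = -(ω+1) - n`
says that `∫ (e^{-t})^n H(t) dt = 0` for every `n : ℕ`, so `∫ p(e^{-t}) H(t) dt = 0` for every
polynomial `p`. If `φ` is continuous with compact support in `(0,∞)`, then `φ(t) = g(e^{-t})` for
the continuous function `g = φ ∘ (-log)` on `[0,1]`, and Weierstrass approximation of `g` gives
`∫ φ H = 0`. By the fundamental lemma of the calculus of variations `H = 0` almost everywhere on
`(0,∞)`, hence everywhere there by continuity.
-/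

/-- The change of variable `x = e^{-t}` turns a continuous function with compact support in `(0,∞)`
into a continuous function on the whole line; at `x = 0`, where `Real.log` has the junk value `0`,
both the value and the limit are zero. -/
lemma continuous_comp_neg_log {φ : ℝ → ℝ} (hφ : Continuous φ) (hc : HasCompactSupport φ)
    (hs : tsupport φ ⊆ Ioi 0) : Continuous fun x : ℝ => φ (-Real.log x) := by
  rw [continuous_iff_continuousAt]
  intro x
  by_cases hx : x = 0
  · subst hx
    have h0 : φ 0 = 0 := image_eq_zero_of_notMem_tsupport fun h => lt_irrefl (0:ℝ) (hs h)
    rw [continuousAt_iff_punctured_nhds]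
    have h1 : Filter.Tendsto (fun x : ℝ => -Real.log x) (nhdsWithin 0 {0}ᶜ) (Filter.cocompact ℝ) :=
      (Filter.tendsto_neg_atBot_atTop.comp Real.tendsto_log_nhdsNE_zero).mono_right
        atTop_le_cocompact
    simpa [h0, Function.comp_def] using hc.is_zero_at_infty.comp h1
  · exact hφ.continuousAt.comp (Real.continuousAt_log hx).neg

theorem laplace_transform_uniqueness
    {X : Type*} [NormedAddCommGroup X] [NormedSpace ℝ X] [CompleteSpace X]
    (ω M : ℝ) (hM : 0 ≤ M)
    (χ : ℝ → X)
    (hcont : ContinuousOn χ (Ioi 0))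
    (hbd : ∀ t > (0:ℝ), ‖χ t‖ ≤ M * Real.exp (ω * t))
    (hlap : ∀ lam : ℝ, lam < -ω →
      (∫ t in Ioi (0:ℝ), Real.exp (lam * t) • χ t) = 0) :
    ∀ t > (0:ℝ), χ t = 0 := by
  set H : ℝ → X := fun t => Real.exp (-(ω + 1) * t) • χ t with hH
  have hHc : ContinuousOn H (Ioi 0) :=
    ContinuousOn.smul (f := fun t => Real.exp (-(ω + 1) * t)) (by fun_prop) hcont
  have hHi : IntegrableOn H (Ioi 0) := by
    refine Integrable.mono' ((exp_neg_integrableOn_Ioi 0 one_pos).const_mul M)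
      (hHc.aestronglyMeasurable measurableSet_Ioi) ?_
    refine (ae_restrict_iff' measurableSet_Ioi).2 (ae_of_all _ fun t ht => ?_)
    rw [hH, norm_smul, Real.norm_of_nonneg (Real.exp_pos _).le]
    calc Real.exp (-(ω + 1) * t) * ‖χ t‖
        ≤ Real.exp (-(ω + 1) * t) * (M * Real.exp (ω * t)) := by gcongr; exact hbd t ht
      _ = M * (Real.exp (-(ω + 1) * t) * Real.exp (ω * t)) := by ring
      _ = M * Real.exp (-1 * t) := by rw [← Real.exp_add]; ring_nf
  have hint : ∀ g : ℝ → ℝ, Continuous g →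
      IntegrableOn (fun t => g (Real.exp (-t)) • H t) (Ioi 0) := by
    intro g hg
    obtain ⟨C, hC⟩ := isCompact_Icc.exists_bound_of_continuousOn (s := Icc (0:ℝ) 1) hg.continuousOn
    refine Integrable.bdd_smul hHi C
      (by fun_prop : Continuous fun t => g (Real.exp (-t))).aestronglyMeasurable ?_
    refine (ae_restrict_iff' measurableSet_Ioi).2 (ae_of_all _ fun t ht => ?_)
    exact hC _ ⟨(Real.exp_pos _).le, Real.exp_le_one_iff.2 (neg_nonpos.2 (le_of_lt ht))⟩
  have hpoly : ∀ p : Polynomial ℝ, ∫ t in Ioi (0:ℝ), p.eval (Real.exp (-t)) • H t = 0 := by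
    intro p
    induction p using Polynomial.induction_on' with
    | add p q hp hq =>
      simp only [Polynomial.eval_add, add_smul]
      rw [integral_add (hint _ p.continuous) (hint _ q.continuous), hp, hq, add_zero]
    | monomial n a =>
      have := hlap (-(ω + 1) - n) (by linarith [(Nat.cast_nonneg n : (0:ℝ) ≤ n)])
      rw [← smul_zero (A := X) a, ← this, ← integral_smul]
      congr 1 with t
      rw [hH, Polynomial.eval_monomial, mul_smul, smul_smul (Real.exp (-t) ^ n), ← Real.exp_nat_mul,
        ← Real.exp_add]
      ring_nf
  have htest : ∀ φ : ℝ → ℝ, ContDiff ℝ (↑(⊤ : ℕ∞)) φ → HasCompactSupport φ → tsupport φ ⊆ Ioi 0 →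
      ∫ t, φ t • H t = 0 := by
    intro φ hφ hc hs
    have hg := continuous_comp_neg_log hφ.continuous hc hs
    have hres : ∫ t, φ t • H t = ∫ t in Ioi (0:ℝ), φ (-Real.log (Real.exp (-t))) • H t := by
      simp only [Real.log_exp, neg_neg]
      refine (setIntegral_eq_integral_of_forall_compl_eq_zero fun t ht => ?_).symm
      rw [image_eq_zero_of_notMem_tsupport fun h => ht (hs h), zero_smul]
    have hle : ∀ ε > 0, ‖∫ t, φ t • H t‖ ≤ ε * ∫ t in Ioi (0:ℝ), ‖H t‖ := by
      intro ε hε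
      obtain ⟨p, hp⟩ := exists_polynomial_near_of_continuousOn 0 1 _ hg.continuousOn ε hε
      rw [hres, ← sub_zero (∫ t in Ioi (0:ℝ), _), ← hpoly p,
        ← integral_sub (hint _ hg) (hint _ p.continuous), ← integral_const_mul]
      refine norm_integral_le_of_norm_le (hHi.norm.const_mul ε) ?_
      refine (ae_restrict_iff' measurableSet_Ioi).2 (ae_of_all _ fun t ht => ?_)
      rw [← sub_smul, norm_smul, norm_sub_rev]
      gcongr
      exact (hp _ ⟨(Real.exp_pos _).le, Real.exp_le_one_iff.2 (neg_nonpos.2 (le_of_lt ht))⟩).le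
    have hlim : Filter.Tendsto (fun ε : ℝ => ε * ∫ t in Ioi (0:ℝ), ‖H t‖)
        (nhdsWithin 0 (Ioi 0)) (nhds 0) := by
      have : Continuous fun ε : ℝ => ε * ∫ t in Ioi (0:ℝ), ‖H t‖ := by fun_prop
      simpa using (this.tendsto 0).mono_left nhdsWithin_le_nhds
    exact norm_le_zero_iff.1 (ge_of_tendsto hlim (Filter.eventually_of_mem self_mem_nhdsWithin hle))
  have hae := isOpen_Ioi.ae_eq_zero_of_integral_contDiff_smul_eq_zero
    (μ := volume) hHi.locallyIntegrableOn htest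
  have hzero : EqOn H 0 (Ioi 0) :=
    Measure.eqOn_open_of_ae_eq ((ae_restrict_iff' measurableSet_Ioi).2 hae) isOpen_Ioi hHc
      continuousOn_const
  intro t ht
  exact (smul_eq_zero.1 (hzero ht)).resolve_left (Real.exp_pos _).ne'
end
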